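/- (Non-local Brézis–Lieb lemma.) Let d ≥ 1, 0 < λ < d, 2 < p < ∞, and let f_n, f be measurable functions on ℝ^d such that f_n(x) → f(x) for a.e. x ∈ ℝ^d, sup_n I_λ(f_n) < ∞, and sup_n ‖f_n‖_{L^p} < ∞. Then I_λ(f_n) − I_λ(f_n − f) − I_λ(f) → 0 as n → ∞; that is, I_λ(f_n) = I_λ(f) + I_λ(f_n − f) + o(1). -/

import Mathlib

open MeasureTheory Filter ENNReal

noncomputable section

/-- The Riesz energy `I_λ(g) = ∬ |g(x)|² |g(y)|² |x-y|^{-λ} dx dy`. -/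
def rieszEnergy (d : ℕ) (lam : ℝ) (g : EuclideanSpace ℝ (Fin d) → ℂ) : ℝ≥0∞ :=
  ∫⁻ x, ∫⁻ y, (‖g x‖₊ : ℝ≥0∞) ^ 2 * (‖g y‖₊ : ℝ≥0∞) ^ 2 *
    ENNReal.ofReal (‖x - y‖ ^ (-lam))

/-!
Pointwise, `‖f n‖²` differs from `‖f n - f₀‖² + ‖f₀‖²` by at most `2 ‖f n - f₀‖ ‖f₀‖`. By the
Cauchy–Schwarz inequality for the product measure, the error in the splitting of the energy is
therefore controlled by the mutual energy of the densities `‖f n - f₀‖²` and `‖f₀‖²`, and it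
suffices that this mutual energy tends to zero.

The Riesz kernel of order `s` in dimension `d` is, up to a constant, the composition square of the
Riesz kernel of order `(d + s) / 2`, so mutual energies obey a Cauchy–Schwarz inequality of their
own. Since the energies of `f n - f₀` are bounded, this allows `‖f₀‖²` to be replaced by the
indicator of a ball `B ρ`. On a larger ball `B R` the potential of that indicator is bounded and
`f n → f₀` in `L²`, by Vitali's theorem and the `L^p` bound. Outside `B R` it is comparable to
`μ (B ρ) / μ (B R)` times the potential of the indicator of `B R`, whose contribution tends to zero
as `R → ∞` because the energy of that indicator is `o(μ (B R) ^ 2)`.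
-/

section Auxiliary

variable {α : Type*} [MeasurableSpace α] {μ : Measure α}

lemma lintegral_mul_le_sqrt_lintegral_sq {f g : α → ℝ≥0∞} (hf : AEMeasurable f μ)
    (hg : AEMeasurable g μ) :
    ∫⁻ x, f x * g x ∂μ ≤ ((∫⁻ x, f x ^ 2 ∂μ) * ∫⁻ x, g x ^ 2 ∂μ) ^ (1 / 2 : ℝ) := by
  have holder := ENNReal.lintegral_mul_le_Lp_mul_Lq μ Real.HolderConjugate.two_two hf hg
  rw [← ENNReal.mul_rpow_of_nonneg _ _ (by norm_num)] at holder
  simpa only [Pi.mul_apply, ENNReal.rpow_two] using holder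

lemma sq_enorm_add_le {F : Type*} [NormedAddCommGroup F] (x y : F) :
    ‖x + y‖ₑ ^ 2 ≤ ‖x‖ₑ ^ 2 + ‖y‖ₑ ^ 2 + 2 * (‖x‖ₑ * ‖y‖ₑ) :=
  calc ‖x + y‖ₑ ^ 2 ≤ (‖x‖ₑ + ‖y‖ₑ) ^ 2 := by gcongr; exact enorm_add_le x y
    _ = ‖x‖ₑ ^ 2 + ‖y‖ₑ ^ 2 + 2 * (‖x‖ₑ * ‖y‖ₑ) := by ring

lemma sq_enorm_add_sq_enorm_le {F : Type*} [NormedAddCommGroup F] (x y : F) :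
    ‖x‖ₑ ^ 2 + ‖y‖ₑ ^ 2 ≤ ‖x + y‖ₑ ^ 2 + 2 * (‖x‖ₑ * ‖y‖ₑ) := by
  have hx : ‖x‖ ≤ ‖x + y‖ + ‖y‖ := by simpa using norm_sub_le (x + y) y
  have hy : ‖y‖ ≤ ‖x + y‖ + ‖x‖ := by simpa using norm_sub_le (x + y) x
  have hreal : ‖x‖ ^ 2 + ‖y‖ ^ 2 ≤ ‖x + y‖ ^ 2 + 2 * (‖x‖ * ‖y‖) := by
    nlinarith [norm_nonneg x, norm_nonneg y, norm_nonneg (x + y)]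
  simp only [enorm_eq_nnnorm]
  exact_mod_cast hreal

lemma tendsto_zero_of_forall_le_add {ι κ : Type*} {l : Filter ι} {l' : Filter κ} [l'.NeBot]
    {a : ι → ℝ≥0∞} {b : κ → ι → ℝ≥0∞} {c : κ → ℝ≥0∞} (h : ∀ᶠ k in l', ∀ n, a n ≤ b k n + c k)
    (hb : ∀ k, Tendsto (b k) l (nhds 0)) (hc : Tendsto c l' (nhds 0)) :
    Tendsto a l (nhds 0) := by
  rw [ENNReal.tendsto_nhds_zero]
  intro ε hε
  have hε2 : 0 < ε / 2 := ENNReal.half_pos hε.ne'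
  obtain ⟨k, hk, hck⟩ := (h.and (ENNReal.tendsto_nhds_zero.1 hc _ hε2)).exists
  filter_upwards [ENNReal.tendsto_nhds_zero.1 (hb k) _ hε2] with n hbn
  calc a n ≤ b k n + c k := hk n
    _ ≤ ε / 2 + ε / 2 := add_le_add hbn hck
    _ = ε := ENNReal.add_halves ε

lemma tendsto_toReal_sub_sub_zero {ι : Type*} {l : Filter ι} {a b c e : ι → ℝ≥0∞}
    (hb : ∀ n, b n ≠ ⊤) (hc : ∀ n, c n ≠ ⊤)
    (hle : ∀ n, a n ≤ b n + c n + e n) (hge : ∀ n, b n + c n ≤ a n + e n)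
    (he : Tendsto e l (nhds 0)) :
    Tendsto (fun n => (a n).toReal - (b n).toReal - (c n).toReal) l (nhds 0) := by
  have he_real : Tendsto (fun n => (e n).toReal) l (nhds 0) :=
    (ENNReal.tendsto_toReal zero_ne_top).comp he
  refine squeeze_zero_norm' ?_ he_real
  filter_upwards [he.eventually_lt_const (by simp : (0 : ℝ≥0∞) < ⊤)] with n hen
  have hbc : b n + c n ≠ ⊤ := add_ne_top.2 ⟨hb n, hc n⟩
  have ha : a n ≠ ⊤ := ne_top_of_le_ne_top (add_ne_top.2 ⟨hbc, hen.ne⟩) (hle n)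
  have hle_real := ENNReal.toReal_mono (add_ne_top.2 ⟨hbc, hen.ne⟩) (hle n)
  have hge_real := ENNReal.toReal_mono (add_ne_top.2 ⟨ha, hen.ne⟩) (hge n)
  rw [ENNReal.toReal_add hbc hen.ne, ENNReal.toReal_add (hb n) (hc n)] at hle_real
  rw [ENNReal.toReal_add ha hen.ne, ENNReal.toReal_add (hb n) (hc n)] at hge_real
  rw [Real.norm_eq_abs, abs_le]
  constructor <;> linarith

end Auxiliary

/-- The mutual energy `∬ u(x) v(y) k(x, y) dμ(x) dμ(y)` of two densities with respect to a
kernel `k`. -/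
def mutualEnergy {α : Type*} [MeasurableSpace α] (μ : Measure α) (k : α → α → ℝ≥0∞)
    (u v : α → ℝ≥0∞) : ℝ≥0∞ :=
  ∫⁻ q, u q.1 * v q.2 * k q.1 q.2 ∂(μ.prod μ)

/-- The potential `x ↦ ∫ v(y) k(x, y) dμ(y)` generated by the density `v`. -/
def kernelPotential {α : Type*} [MeasurableSpace α] (μ : Measure α) (k : α → α → ℝ≥0∞)
    (v : α → ℝ≥0∞) (x : α) : ℝ≥0∞ :=
  ∫⁻ y, v y * k x y ∂μ

/-- The self-energy `I(g) = ∬ ‖g(x)‖² ‖g(y)‖² k(x, y) dμ(x) dμ(y)` of a wave function `g`, that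
is, of the density `‖g‖²`. -/
def kernelEnergy {α F : Type*} [MeasurableSpace α] [ENorm F] (μ : Measure α)
    (k : α → α → ℝ≥0∞) (g : α → F) : ℝ≥0∞ :=
  mutualEnergy μ k (fun x => ‖g x‖ₑ ^ 2) (fun x => ‖g x‖ₑ ^ 2)

section Kernel

variable {α : Type*} [MeasurableSpace α] {μ : Measure α} {k : α → α → ℝ≥0∞}

lemma mutualEnergy_mono {u u' v v' : α → ℝ≥0∞} (hu : u ≤ u') (hv : v ≤ v') :
    mutualEnergy μ k u v ≤ mutualEnergy μ k u' v' :=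
  lintegral_mono fun q => by gcongr <;> apply_assumption

lemma mutualEnergy_const_mul_right {c : ℝ≥0∞} (hc : c ≠ ⊤) (u v : α → ℝ≥0∞) :
    mutualEnergy μ k u (fun x => c * v x) = c * mutualEnergy μ k u v := by
  rw [mutualEnergy, mutualEnergy, ← lintegral_const_mul' _ _ hc]
  exact lintegral_congr fun q => by ring

lemma aemeasurable_mul_mul_kernel (hk : Measurable k.uncurry) {u v : α → ℝ≥0∞}
    (hu : AEMeasurable u μ) (hv : AEMeasurable v μ) :
    AEMeasurable (fun q : α × α => u q.1 * v q.2 * k q.1 q.2) (μ.prod μ) :=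
  (hu.comp_fst.mul hv.comp_snd).mul hk.aemeasurable

lemma mutualEnergy_add_right (hk : Measurable k.uncurry) {u v : α → ℝ≥0∞}
    (hu : AEMeasurable u μ) (hv : AEMeasurable v μ) (w : α → ℝ≥0∞) :
    mutualEnergy μ k u (v + w) = mutualEnergy μ k u v + mutualEnergy μ k u w := by
  simp only [mutualEnergy, Pi.add_apply, mul_add, add_mul]
  exact lintegral_add_left' (aemeasurable_mul_mul_kernel hk hu hv) _

lemma mutualEnergy_add_left (hk : Measurable k.uncurry) {u v w : α → ℝ≥0∞}
    (hu : AEMeasurable u μ) (hw : AEMeasurable w μ) :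
    mutualEnergy μ k (u + v) w = mutualEnergy μ k u w + mutualEnergy μ k v w := by
  simp only [mutualEnergy, Pi.add_apply, add_mul]
  exact lintegral_add_left' (aemeasurable_mul_mul_kernel hk hu hw) _

lemma mutualEnergy_mul_mul_le (hk : Measurable k.uncurry) {u₁ u₂ v₁ v₂ : α → ℝ≥0∞}
    (hu₁ : AEMeasurable u₁ μ) (hu₂ : AEMeasurable u₂ μ) (hv₁ : AEMeasurable v₁ μ)
    (hv₂ : AEMeasurable v₂ μ) :
    mutualEnergy μ k (u₁ * u₂) (v₁ * v₂) ≤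
      (mutualEnergy μ k (u₁ ^ 2) (v₁ ^ 2) * mutualEnergy μ k (u₂ ^ 2) (v₂ ^ 2)) ^ (1 / 2 : ℝ) := by
  have hk_sqrt : Measurable (fun x y => k x y ^ (1 / 2 : ℝ)).uncurry := hk.pow_const _
  have sqrt_mul_sqrt (t : ℝ≥0∞) : t ^ (1 / 2 : ℝ) * t ^ (1 / 2 : ℝ) = t := by
    rw [← ENNReal.rpow_add_of_nonneg _ _ (by norm_num) (by norm_num)]
    norm_num
  convert lintegral_mul_le_sqrt_lintegral_sq (aemeasurable_mul_mul_kernel hk_sqrt hu₁ hv₁)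
    (aemeasurable_mul_mul_kernel hk_sqrt hu₂ hv₂) using 2
  · refine lintegral_congr fun q => ?_
    calc u₁ q.1 * u₂ q.1 * (v₁ q.2 * v₂ q.2) * k q.1 q.2
        = u₁ q.1 * u₂ q.1 * (v₁ q.2 * v₂ q.2) *
            (k q.1 q.2 ^ (1 / 2 : ℝ) * k q.1 q.2 ^ (1 / 2 : ℝ)) := by rw [sqrt_mul_sqrt]
      _ = _ := by ring
  · simp only [mutualEnergy, Pi.pow_apply, mul_pow, sq (k _ _ ^ (1 / 2 : ℝ)), sqrt_mul_sqrt]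

lemma mutualEnergy_le_liminf (hk : Measurable k.uncurry) {ι : Type*} {l : Filter ι} [l.NeBot]
    [l.IsCountablyGenerated] {u v : ι → α → ℝ≥0∞} {u₀ v₀ : α → ℝ≥0∞}
    (hu : ∀ n, AEMeasurable (u n) μ) (hv : ∀ n, AEMeasurable (v n) μ)
    (hu₀ : ∀ᵐ x ∂μ, Tendsto (fun n => u n x) l (nhds (u₀ x)))
    (hv₀ : ∀ᵐ x ∂μ, Tendsto (fun n => v n x) l (nhds (v₀ x))) :
    mutualEnergy μ k u₀ v₀ ≤ liminf (fun n => mutualEnergy μ k (u n) (v n)) l := by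
  refine le_trans (lintegral_mono_ae ?_)
    (lintegral_liminf_le' fun n => aemeasurable_mul_mul_kernel hk (hu n) (hv n))
  filter_upwards [Measure.quasiMeasurePreserving_fst.ae hu₀,
    Measure.quasiMeasurePreserving_snd.ae hv₀] with q hu_q hv_q
  calc u₀ q.1 * v₀ q.2 * k q.1 q.2
      = liminf (fun n => u n q.1) l * liminf (fun n => v n q.2) l *
          liminf (fun _ => k q.1 q.2) l := by
        rw [hu_q.liminf_eq, hv_q.liminf_eq, liminf_const]
    _ ≤ liminf (fun n => u n q.1 * v n q.2) l * liminf (fun _ => k q.1 q.2) l := by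
        gcongr
        exact ENNReal.le_liminf_mul
    _ ≤ liminf (fun n => u n q.1 * v n q.2 * k q.1 q.2) l := ENNReal.le_liminf_mul

lemma tendsto_mutualEnergy_self_zero_of_le (hk : Measurable k.uncurry) {v : α → ℝ≥0∞}
    (hv : mutualEnergy μ k v v ≠ ⊤) {w : ℕ → α → ℝ≥0∞} (hw : ∀ n, AEMeasurable (w n) μ)
    (hwv : ∀ n, w n ≤ v) (hw_zero : ∀ x, ∀ᶠ n in atTop, w n x = 0) :
    Tendsto (fun n => mutualEnergy μ k (w n) (w n)) atTop (nhds 0) := by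
  rw [← lintegral_zero (μ := μ.prod μ)]
  refine tendsto_lintegral_of_dominated_convergence' _
    (fun n => aemeasurable_mul_mul_kernel hk (hw n) (hw n))
    (fun n => .of_forall fun q => ?_) hv (.of_forall fun q => ?_)
  · exact mul_le_mul' (mul_le_mul' (hwv n _) (hwv n _)) le_rfl
  · refine tendsto_const_nhds.congr' ?_
    filter_upwards [hw_zero q.1] with n hn
    simp [hn]

lemma exists_le_natCast_mul_indicator_add (hk : Measurable k.uncurry) {s : ℕ → Set α}
    (hs : ∀ j, MeasurableSet (s j)) (hs_exhaust : ∀ x, ∀ᶠ j in atTop, x ∈ s j)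
    {v : α → ℝ≥0∞} (hv : AEMeasurable v μ) (hv_top : ∀ x, v x ≠ ⊤)
    (hv_fin : mutualEnergy μ k v v ≠ ⊤) :
    ∃ w : ℕ → α → ℝ≥0∞, (∀ j, AEMeasurable (w j) μ) ∧
      (∀ j : ℕ, v ≤ (fun x => (j : ℝ≥0∞) * (s j).indicator 1 x) + w j) ∧
      Tendsto (fun j => mutualEnergy μ k (w j) (w j)) atTop (nhds 0) := by
  have hmeas (j : ℕ) : Measurable fun x => (j : ℝ≥0∞) * (s j).indicator 1 x :=
    (measurable_one.indicator (hs j)).const_mul _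
  refine ⟨fun j x => v x - j * (s j).indicator 1 x, fun j => hv.sub (hmeas j).aemeasurable,
    fun j x => le_add_tsub, ?_⟩
  refine tendsto_mutualEnergy_self_zero_of_le hk hv_fin
    (fun j => hv.sub (hmeas j).aemeasurable) (fun j x => tsub_le_self) fun x => ?_
  obtain ⟨N, hN⟩ := ENNReal.exists_nat_gt (hv_top x)
  filter_upwards [hs_exhaust x, eventually_ge_atTop N] with j hxj hNj
  have hvj : v x ≤ j := hN.le.trans (by exact_mod_cast hNj)
  simp [hxj, tsub_eq_zero_of_le hvj]

lemma kernelPotential_indicator_one {S : Set α} (hS : MeasurableSet S) (x : α) :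
    kernelPotential μ k (S.indicator 1) x = ∫⁻ y in S, k x y ∂μ := by
  rw [kernelPotential, ← lintegral_indicator hS]
  refine lintegral_congr fun y => ?_
  by_cases hy : y ∈ S <;> simp [hy]

lemma kernelPotential_indicator_mul_measure_le {S T : Set α} (hS : MeasurableSet S)
    (hT : MeasurableSet T) {x : α} (hkx : Measurable (k x)) {c : ℝ≥0∞}
    (hle : ∀ y ∈ S, ∀ z ∈ T, k x y ≤ c * k x z) :
    kernelPotential μ k (S.indicator 1) x * μ T ≤
      c * μ S * kernelPotential μ k (T.indicator 1) x := by
  simp only [kernelPotential_indicator_one, hS, hT]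
  calc (∫⁻ y in S, k x y ∂μ) * μ T = ∫⁻ _ in T, ∫⁻ y in S, k x y ∂μ ∂μ :=
        (setLIntegral_const T _).symm
    _ ≤ ∫⁻ z in T, c * μ S * k x z ∂μ := by
        refine setLIntegral_mono' hT fun z hz => ?_
        calc ∫⁻ y in S, k x y ∂μ ≤ ∫⁻ _ in S, c * k x z ∂μ :=
              setLIntegral_mono' hS fun y hy => hle y hy z hz
          _ = c * μ S * k x z := by rw [setLIntegral_const]; ring
    _ = c * μ S * ∫⁻ z in T, k x z ∂μ := lintegral_const_mul _ hkx

variable [SFinite μ]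

lemma mutualEnergy_comm (hk : ∀ x y, k x y = k y x) (u v : α → ℝ≥0∞) :
    mutualEnergy μ k u v = mutualEnergy μ k v u := by
  unfold mutualEnergy
  rw [← lintegral_prod_swap]
  refine lintegral_congr fun q => ?_
  simp only [Prod.fst_swap, Prod.snd_swap, hk q.2 q.1, mul_comm (u q.2)]

lemma aemeasurable_kernelPotential (hk : Measurable k.uncurry) {v : α → ℝ≥0∞}
    (hv : AEMeasurable v μ) : AEMeasurable (kernelPotential μ k v) μ :=
  (hv.comp_snd.mul hk.aemeasurable : AEMeasurable (fun q : α × α => v q.2 * k q.1 q.2)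
    (μ.prod μ)).lintegral_prod_right'

lemma mutualEnergy_eq_lintegral_kernelPotential (hk : Measurable k.uncurry) {u v : α → ℝ≥0∞}
    (hu : AEMeasurable u μ) (hv : AEMeasurable v μ) :
    mutualEnergy μ k u v = ∫⁻ x, u x * kernelPotential μ k v x ∂μ := by
  rw [mutualEnergy, lintegral_prod _ (aemeasurable_mul_mul_kernel hk hu hv)]
  refine lintegral_congr fun x => ?_
  simp only [mul_assoc]
  exact lintegral_const_mul'' _ (hv.mul (hk.of_uncurry_left (x := x)).aemeasurable)

lemma mutualEnergy_add_add_self (hk : Measurable k.uncurry) (hk_symm : ∀ x y, k x y = k y x)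
    {u v : α → ℝ≥0∞} (hu : AEMeasurable u μ) (hv : AEMeasurable v μ) :
    mutualEnergy μ k (u + v) (u + v) =
      mutualEnergy μ k u u + mutualEnergy μ k v v + 2 * mutualEnergy μ k u v := by
  rw [mutualEnergy_add_right hk (hu.add hv) hu, mutualEnergy_add_left hk hu hu,
    mutualEnergy_add_left hk hu hv, mutualEnergy_comm hk_symm v u]
  ring

lemma mutualEnergy_add_two_mul_self (hk : Measurable k.uncurry)
    (hk_symm : ∀ x y, k x y = k y x) {u v : α → ℝ≥0∞} (hu : AEMeasurable u μ)
    (hv : AEMeasurable v μ) :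
    mutualEnergy μ k (u + 2 * v) (u + 2 * v) =
      mutualEnergy μ k u u + 4 * mutualEnergy μ k v v + 4 * mutualEnergy μ k u v := by
  have two_mul_right (w : α → ℝ≥0∞) : mutualEnergy μ k w (2 * v) = 2 * mutualEnergy μ k w v :=
    mutualEnergy_const_mul_right ofNat_ne_top w v
  have hv2 : AEMeasurable (2 * v) μ := hv.const_mul 2
  rw [mutualEnergy_add_add_self hk hk_symm hu hv2, two_mul_right, two_mul_right,
    mutualEnergy_comm hk_symm (2 * v), two_mul_right]
  ring

end Kernel

section Splitting

variable {α : Type*} [MeasurableSpace α] {μ : Measure α} {k : α → α → ℝ≥0∞}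
  {a b c : α → ℝ≥0∞}

/-- The error with which the energy splits over two wave functions of moduli `a` and `b`. It is
controlled by the mutual energy of the densities `a ^ 2` and `b ^ 2`; the constants are those of
the lower bound `add_mutualEnergy_sq_le_add_splittingError`. -/
def splittingError {α : Type*} [MeasurableSpace α] (μ : Measure α) (k : α → α → ℝ≥0∞)
    (a b : α → ℝ≥0∞) : ℝ≥0∞ :=
  12 * mutualEnergy μ k (a ^ 2) (b ^ 2) + 4 *
    ((mutualEnergy μ k (a ^ 2) (a ^ 2) * mutualEnergy μ k (a ^ 2) (b ^ 2)) ^ (1 / 2 : ℝ) +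
      (mutualEnergy μ k (b ^ 2) (b ^ 2) * mutualEnergy μ k (a ^ 2) (b ^ 2)) ^ (1 / 2 : ℝ))

lemma tendsto_splittingError_zero {ι : Type*} {l : Filter ι} {a : ι → α → ℝ≥0∞} {M : ℝ≥0∞}
    (hM : M ≠ ⊤) (ha : ∀ n, mutualEnergy μ k (a n ^ 2) (a n ^ 2) ≤ M)
    (hb : mutualEnergy μ k (b ^ 2) (b ^ 2) ≠ ⊤)
    (hab : Tendsto (fun n => mutualEnergy μ k (a n ^ 2) (b ^ 2)) l (nhds 0)) :
    Tendsto (fun n => splittingError μ k (a n) b) l (nhds 0) := by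
  have sqrt_tendsto {C : ℝ≥0∞} (hC : C ≠ ⊤) : Tendsto
      (fun n => (C * mutualEnergy μ k (a n ^ 2) (b ^ 2)) ^ (1 / 2 : ℝ)) l (nhds 0) := by
    have h := (ENNReal.Tendsto.const_mul hab (.inr hC)).ennrpow_const (1 / 2)
    rwa [mul_zero, ENNReal.zero_rpow_of_pos (by norm_num)] at h
  have bound_tendsto := (ENNReal.Tendsto.const_mul (a := 12) hab (.inr ofNat_ne_top)).add
    (ENNReal.Tendsto.const_mul (a := 4) ((sqrt_tendsto hM).add (sqrt_tendsto hb))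
      (.inr ofNat_ne_top))
  simp only [mul_zero, add_zero] at bound_tendsto
  refine tendsto_of_tendsto_of_tendsto_of_le_of_le tendsto_const_nhds bound_tendsto
    (fun _ => zero_le) fun n => ?_
  unfold splittingError
  gcongr
  exact ha n

variable [SFinite μ]

lemma mutualEnergy_mul_self_le (hk : Measurable k.uncurry) (hk_symm : ∀ x y, k x y = k y x)
    (ha : AEMeasurable a μ) (hb : AEMeasurable b μ) :
    mutualEnergy μ k (a * b) (a * b) ≤ mutualEnergy μ k (a ^ 2) (b ^ 2) := by
  have holder := mutualEnergy_mul_mul_le hk ha hb hb ha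
  rwa [mutualEnergy_comm hk_symm (b ^ 2), ← sq, mul_comm b a, ← ENNReal.rpow_natCast_mul,
    show ((2 : ℕ) : ℝ) * (1 / 2) = 1 by norm_num, ENNReal.rpow_one] at holder

lemma mutualEnergy_sq_add_sq_mul_le (hk : Measurable k.uncurry)
    (hk_symm : ∀ x y, k x y = k y x) (ha : AEMeasurable a μ) (hb : AEMeasurable b μ) :
    mutualEnergy μ k (a ^ 2 + b ^ 2) (a * b) ≤
      (mutualEnergy μ k (a ^ 2) (a ^ 2) * mutualEnergy μ k (a ^ 2) (b ^ 2)) ^ (1 / 2 : ℝ) +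
      (mutualEnergy μ k (b ^ 2) (b ^ 2) * mutualEnergy μ k (a ^ 2) (b ^ 2)) ^ (1 / 2 : ℝ) := by
  have ha_sq : AEMeasurable (a ^ 2) μ := ha.pow_const 2
  rw [mutualEnergy_add_left hk ha_sq (ha.mul hb)]
  refine add_le_add ?_ ?_
  · simpa only [← sq] using mutualEnergy_mul_mul_le hk ha ha ha hb
  · rw [mutualEnergy_comm hk_symm (a ^ 2), mul_comm a b]
    simpa only [← sq] using mutualEnergy_mul_mul_le hk hb hb hb ha

lemma mutualEnergy_sq_le_add_splittingError (hk : Measurable k.uncurry)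
    (hk_symm : ∀ x y, k x y = k y x) (ha : AEMeasurable a μ) (hb : AEMeasurable b μ)
    (hc : c ^ 2 ≤ a ^ 2 + b ^ 2 + 2 * (a * b)) :
    mutualEnergy μ k (c ^ 2) (c ^ 2) ≤ mutualEnergy μ k (a ^ 2) (a ^ 2) +
      mutualEnergy μ k (b ^ 2) (b ^ 2) + splittingError μ k a b := by
  have ha_sq : AEMeasurable (a ^ 2) μ := ha.pow_const 2
  have hb_sq : AEMeasurable (b ^ 2) μ := hb.pow_const 2
  grw [mutualEnergy_mono hc hc,
    mutualEnergy_add_two_mul_self hk hk_symm (ha_sq.add hb_sq) (ha.mul hb),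
    mutualEnergy_add_add_self hk hk_symm ha_sq hb_sq,
    mutualEnergy_mul_self_le hk hk_symm ha hb, mutualEnergy_sq_add_sq_mul_le hk hk_symm ha hb]
  unfold splittingError
  generalize mutualEnergy μ k (a ^ 2) (b ^ 2) = δ, _ + (_ : ℝ≥0∞) ^ (1 / 2 : ℝ) = r
  calc _ = mutualEnergy μ k (a ^ 2) (a ^ 2) + mutualEnergy μ k (b ^ 2) (b ^ 2) +
        (6 * δ + 4 * r) := by ring
    _ ≤ _ := by gcongr; norm_num

lemma add_mutualEnergy_sq_le_add_splittingError (hk : Measurable k.uncurry)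
    (hk_symm : ∀ x y, k x y = k y x) (ha : AEMeasurable a μ) (hb : AEMeasurable b μ)
    (hc_meas : AEMeasurable c μ) (hc : c ^ 2 ≤ a ^ 2 + b ^ 2 + 2 * (a * b))
    (hab : a ^ 2 + b ^ 2 ≤ c ^ 2 + 2 * (a * b)) :
    mutualEnergy μ k (a ^ 2) (a ^ 2) + mutualEnergy μ k (b ^ 2) (b ^ 2) ≤
      mutualEnergy μ k (c ^ 2) (c ^ 2) + splittingError μ k a b := by
  have ha_sq : AEMeasurable (a ^ 2) μ := ha.pow_const 2
  have hb_sq : AEMeasurable (b ^ 2) μ := hb.pow_const 2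
  have hc_sq : AEMeasurable (c ^ 2) μ := hc_meas.pow_const 2
  have hmul := mutualEnergy_mul_self_le hk hk_symm ha hb
  have hmixed : mutualEnergy μ k (c ^ 2) (a * b) ≤
      mutualEnergy μ k (a ^ 2 + b ^ 2) (a * b) + 2 * mutualEnergy μ k (a * b) (a * b) := by
    grw [mutualEnergy_mono hc le_rfl,
      mutualEnergy_add_left hk (ha_sq.add hb_sq) (ha.mul hb), mutualEnergy_comm hk_symm (2 * _)]
    exact add_le_add_right (mutualEnergy_const_mul_right ofNat_ne_top _ _).le _
  calc mutualEnergy μ k (a ^ 2) (a ^ 2) + mutualEnergy μ k (b ^ 2) (b ^ 2)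
      ≤ mutualEnergy μ k (a ^ 2 + b ^ 2) (a ^ 2 + b ^ 2) := by
        rw [mutualEnergy_add_add_self hk hk_symm ha_sq hb_sq]
        exact le_self_add
    _ ≤ mutualEnergy μ k (c ^ 2 + 2 * (a * b)) (c ^ 2 + 2 * (a * b)) := mutualEnergy_mono hab hab
    _ = mutualEnergy μ k (c ^ 2) (c ^ 2) + 4 * mutualEnergy μ k (a * b) (a * b) +
          4 * mutualEnergy μ k (c ^ 2) (a * b) :=
        mutualEnergy_add_two_mul_self hk hk_symm hc_sq (ha.mul hb)
    _ ≤ mutualEnergy μ k (c ^ 2) (c ^ 2) + 12 * mutualEnergy μ k (a * b) (a * b) +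
          4 * mutualEnergy μ k (a ^ 2 + b ^ 2) (a * b) := by
        grw [hmixed]
        exact le_of_eq (by ring)
    _ ≤ mutualEnergy μ k (c ^ 2) (c ^ 2) + splittingError μ k a b := by
        grw [hmul, mutualEnergy_sq_add_sq_mul_le hk hk_symm ha hb, add_assoc]
        rfl

end Splitting

section KernelEnergy

variable {α F : Type*} [MeasurableSpace α] [NormedAddCommGroup F] {μ : Measure α}
  {k : α → α → ℝ≥0∞}

lemma kernelEnergy_le_of_tendsto_ae (hk : Measurable k.uncurry) {ι : Type*} {l : Filter ι}
    [l.NeBot] [l.IsCountablyGenerated] {f : ι → α → F} {f₀ : α → F}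
    (hf : ∀ n, AEStronglyMeasurable (f n) μ)
    (hlim : ∀ᵐ x ∂μ, Tendsto (fun n => f n x) l (nhds (f₀ x))) {M : ℝ≥0∞}
    (hM : ∀ n, kernelEnergy μ k (f n) ≤ M) : kernelEnergy μ k f₀ ≤ M := by
  have hmeas (n : ι) : AEMeasurable (fun x => ‖f n x‖ₑ ^ 2) μ := (hf n).enorm.pow_const 2
  have hsq_lim : ∀ᵐ x ∂μ, Tendsto (fun n => ‖f n x‖ₑ ^ 2) l (nhds (‖f₀ x‖ₑ ^ 2)) := by
    filter_upwards [hlim] with x hx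
    exact ((ENNReal.continuous_pow 2).tendsto _).comp hx.enorm
  calc kernelEnergy μ k f₀ ≤ liminf (fun n => kernelEnergy μ k (f n)) l :=
        mutualEnergy_le_liminf hk hmeas hmeas hsq_lim hsq_lim
    _ ≤ liminf (fun _ => M) l := liminf_le_liminf (.of_forall hM)
    _ = M := liminf_const M

variable [SFinite μ]

lemma tendsto_toReal_kernelEnergy_sub_sub (hk : Measurable k.uncurry)
    (hk_symm : ∀ x y, k x y = k y x) {ι : Type*} {l : Filter ι} {f : ι → α → F} {f₀ : α → F}
    (hf : ∀ n, AEStronglyMeasurable (f n) μ) (hf₀ : AEStronglyMeasurable f₀ μ) {M : ℝ≥0∞}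
    (hM : M ≠ ⊤) (hdiff_le : ∀ n, kernelEnergy μ k (fun x => f n x - f₀ x) ≤ M)
    (hf₀_fin : kernelEnergy μ k f₀ ≠ ⊤)
    (hmutual : Tendsto (fun n => mutualEnergy μ k (fun x => ‖f n x - f₀ x‖ₑ ^ 2)
      (fun x => ‖f₀ x‖ₑ ^ 2)) l (nhds 0)) :
    Tendsto (fun n => (kernelEnergy μ k (f n)).toReal
      - (kernelEnergy μ k (fun x => f n x - f₀ x)).toReal - (kernelEnergy μ k f₀).toReal)
      l (nhds 0) := by
  have hsq_le (n : ι) (x : α) := sq_enorm_add_le (f n x - f₀ x) (f₀ x)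
  have hle_sq (n : ι) (x : α) := sq_enorm_add_sq_enorm_le (f n x - f₀ x) (f₀ x)
  simp only [sub_add_cancel] at hsq_le hle_sq
  have hdiff (n : ι) : AEMeasurable (fun x => ‖f n x - f₀ x‖ₑ) μ := ((hf n).sub hf₀).enorm
  exact tendsto_toReal_sub_sub_zero (fun n => ne_top_of_le_ne_top hM (hdiff_le n))
    (fun _ => hf₀_fin)
    (fun n => mutualEnergy_sq_le_add_splittingError hk hk_symm (hdiff n) hf₀.enorm (hsq_le n))
    (fun n => add_mutualEnergy_sq_le_add_splittingError hk hk_symm (hdiff n) hf₀.enorm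
      (hf n).enorm (hsq_le n) (hle_sq n))
    (tendsto_splittingError_zero hM hdiff_le hf₀_fin hmutual)

end KernelEnergy

/-- The kernel `k` is of positive type, in the form used here: its mutual energy satisfies the
Cauchy–Schwarz inequality on nonnegative densities. -/
def EnergyCauchySchwarz {α : Type*} [MeasurableSpace α] (μ : Measure α)
    (k : α → α → ℝ≥0∞) : Prop :=
  ∀ ⦃u v : α → ℝ≥0∞⦄, AEMeasurable u μ → AEMeasurable v μ →
    mutualEnergy μ k u v ≤ (mutualEnergy μ k u u * mutualEnergy μ k v v) ^ (1 / 2 : ℝ)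

namespace EnergyCauchySchwarz

variable {α F : Type*} [MeasurableSpace α] [NormedAddCommGroup F] {μ : Measure α}
  {k : α → α → ℝ≥0∞}

lemma mutualEnergy_le (hk_cs : EnergyCauchySchwarz μ k) {u v : α → ℝ≥0∞}
    (hu : AEMeasurable u μ) (hv : AEMeasurable v μ) :
    mutualEnergy μ k u v ≤ mutualEnergy μ k u u + mutualEnergy μ k v v := by
  set U := mutualEnergy μ k u u
  set V := mutualEnergy μ k v v
  calc mutualEnergy μ k u v ≤ (U * V) ^ (1 / 2 : ℝ) := hk_cs hu hv
    _ ≤ ((U + V) ^ (2 : ℝ)) ^ (1 / 2 : ℝ) := by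
        rw [ENNReal.rpow_two, sq]
        gcongr
        exacts [le_self_add, le_add_self]
    _ = U + V := by rw [← ENNReal.rpow_mul]; norm_num

lemma mutualEnergy_div_le (hk_cs : EnergyCauchySchwarz μ k) {u v : α → ℝ≥0∞}
    (hu : AEMeasurable u μ) (hv : AEMeasurable v μ) (m : ℝ≥0∞) :
    mutualEnergy μ k u v / m ≤
      (mutualEnergy μ k u u * (mutualEnergy μ k v v / m ^ 2)) ^ (1 / 2 : ℝ) := by
  have hsqrt : (m ^ 2) ^ (1 / 2 : ℝ) = m := by
    rw [← ENNReal.rpow_natCast_mul]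
    norm_num
  rw [← mul_div_assoc, ENNReal.div_rpow_of_nonneg _ _ (by norm_num), hsqrt]
  exact ENNReal.div_le_div_right (hk_cs hu hv) m

lemma kernelEnergy_sub_le [SFinite μ] (hk_cs : EnergyCauchySchwarz μ k)
    (hk : Measurable k.uncurry) (hk_symm : ∀ x y, k x y = k y x) {f g : α → F}
    (hf : AEStronglyMeasurable f μ) (hg : AEStronglyMeasurable g μ) :
    kernelEnergy μ k (fun x => f x - g x) ≤ 12 * (kernelEnergy μ k f + kernelEnergy μ k g) := by
  set u : α → ℝ≥0∞ := fun x => ‖f x‖ₑ ^ 2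
  set v : α → ℝ≥0∞ := fun x => ‖g x‖ₑ ^ 2
  have hu : AEMeasurable u μ := hf.enorm.pow_const 2
  have hv : AEMeasurable v μ := hg.enorm.pow_const 2
  have hsq (x : α) : ‖f x - g x‖ₑ ^ 2 ≤ 2 * (u + v) x := by
    have h := ENNReal.rpow_add_le_mul_rpow_add_rpow ‖f x‖ₑ ‖g x‖ₑ one_le_two
    norm_num at h
    exact (pow_le_pow_left' enorm_sub_le 2).trans h
  calc kernelEnergy μ k (fun x => f x - g x)
      ≤ mutualEnergy μ k (fun x => 2 * (u + v) x) (fun x => 2 * (u + v) x) :=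
        mutualEnergy_mono hsq hsq
    _ = 4 * mutualEnergy μ k (u + v) (u + v) := by
        rw [mutualEnergy_const_mul_right ofNat_ne_top, mutualEnergy_comm hk_symm,
          mutualEnergy_const_mul_right ofNat_ne_top]
        ring
    _ ≤ 4 * (mutualEnergy μ k u u + mutualEnergy μ k v v +
          2 * (mutualEnergy μ k u u + mutualEnergy μ k v v)) := by
        rw [mutualEnergy_add_add_self hk hk_symm hu hv]
        grw [hk_cs.mutualEnergy_le hu hv]
    _ = 12 * (kernelEnergy μ k f + kernelEnergy μ k g) := by
        unfold kernelEnergy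
        ring

lemma tendsto_mutualEnergy_zero (hk_cs : EnergyCauchySchwarz μ k) (hk : Measurable k.uncurry)
    {ι : Type*} {l : Filter ι} {u : ι → α → ℝ≥0∞} (hu : ∀ n, AEMeasurable (u n) μ)
    {M : ℝ≥0∞} (hM : M ≠ ⊤) (hu_le : ∀ n, mutualEnergy μ k (u n) (u n) ≤ M)
    {s : ℕ → Set α} (hs : ∀ j, MeasurableSet (s j)) (hs_exhaust : ∀ x, ∀ᶠ j in atTop, x ∈ s j)
    (hus : ∀ j, Tendsto (fun n => mutualEnergy μ k (u n) ((s j).indicator 1)) l (nhds 0))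
    {v : α → ℝ≥0∞} (hv : AEMeasurable v μ) (hv_top : ∀ x, v x ≠ ⊤)
    (hv_fin : mutualEnergy μ k v v ≠ ⊤) :
    Tendsto (fun n => mutualEnergy μ k (u n) v) l (nhds 0) := by
  obtain ⟨w, hw, hvw, hw_lim⟩ :=
    exists_le_natCast_mul_indicator_add hk hs hs_exhaust hv hv_top hv_fin
  have hcs_lim : Tendsto (fun j => (M * mutualEnergy μ k (w j) (w j)) ^ (1 / 2 : ℝ))
      atTop (nhds 0) := by
    have h := (ENNReal.Tendsto.const_mul hw_lim (.inr hM)).ennrpow_const (1 / 2)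
    rwa [mul_zero, ENNReal.zero_rpow_of_pos (by norm_num)] at h
  have hsplit (j : ℕ) (n : ι) : mutualEnergy μ k (u n) v ≤
      j * mutualEnergy μ k (u n) ((s j).indicator 1) +
        (M * mutualEnergy μ k (w j) (w j)) ^ (1 / 2 : ℝ) := by
    have hmeas : Measurable fun x => (j : ℝ≥0∞) * (s j).indicator 1 x :=
      (measurable_one.indicator (hs j)).const_mul _
    grw [mutualEnergy_mono le_rfl (hvw j), mutualEnergy_add_right hk (hu n) hmeas.aemeasurable,
      mutualEnergy_const_mul_right (natCast_ne_top j), hk_cs (hu n) (hw j), hu_le n]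
  refine tendsto_zero_of_forall_le_add (.of_forall hsplit) (fun j => ?_) hcs_lim
  simpa using ENNReal.Tendsto.const_mul (hus j) (.inr (natCast_ne_top j))

end EnergyCauchySchwarz

section Factorization

variable {α : Type*} [MeasurableSpace α] {μ : Measure α} [SFinite μ] {k h : α → α → ℝ≥0∞}

lemma kernelPotential_kernelPotential (hk : Measurable k.uncurry) (hh : Measurable h.uncurry)
    {v : α → ℝ≥0∞} (hv : AEMeasurable v μ) (x : α) :
    kernelPotential μ k (kernelPotential μ h v) x =
      kernelPotential μ (fun x y => ∫⁻ z, k x z * h z y ∂μ) v x := by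
  have hkx : Measurable (k x) := hk.of_uncurry_left
  have hmeas : AEMeasurable (fun q : α × α => v q.2 * h q.1 q.2 * k x q.1) (μ.prod μ) :=
    (hv.comp_snd.mul hh.aemeasurable).mul (hkx.comp measurable_fst).aemeasurable
  calc ∫⁻ z, (∫⁻ y, v y * h z y ∂μ) * k x z ∂μ
      = ∫⁻ z, ∫⁻ y, v y * h z y * k x z ∂μ ∂μ := by
        refine lintegral_congr fun z => (lintegral_mul_const'' _ ?_).symm
        exact hv.mul (hh.of_uncurry_left (x := z)).aemeasurable
    _ = ∫⁻ y, ∫⁻ z, v y * h z y * k x z ∂μ ∂μ := lintegral_lintegral_swap hmeas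
    _ = ∫⁻ y, v y * ∫⁻ z, k x z * h z y ∂μ ∂μ := by
        refine lintegral_congr fun y => ?_
        have hkh : Measurable fun z => k x z * h z y := hkx.mul hh.of_uncurry_right
        rw [← lintegral_const_mul _ hkh]
        exact lintegral_congr fun z => by ring

lemma lintegral_kernelPotential_mul_kernelPotential (hk : Measurable k.uncurry)
    (hh : Measurable h.uncurry) (hh_symm : ∀ x y, h x y = h y x) {c : ℝ≥0∞} (hc : c ≠ ⊤)
    (hfact : ∀ x, ∀ᵐ y ∂μ, ∫⁻ z, h x z * h z y ∂μ = c * k x y) {u v : α → ℝ≥0∞}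
    (hu : AEMeasurable u μ) (hv : AEMeasurable v μ) :
    ∫⁻ z, kernelPotential μ h u z * kernelPotential μ h v z ∂μ = c * mutualEnergy μ k u v := by
  have hpotential (x : α) :
      kernelPotential μ h (kernelPotential μ h v) x = c * kernelPotential μ k v x := by
    rw [kernelPotential_kernelPotential hh hh hv, kernelPotential, kernelPotential,
      ← lintegral_const_mul' _ _ hc]
    refine lintegral_congr_ae ?_
    filter_upwards [hfact x] with y hy
    rw [hy]
    ring
  have hPv := aemeasurable_kernelPotential hh hv
  calc ∫⁻ z, kernelPotential μ h u z * kernelPotential μ h v z ∂μ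
      = mutualEnergy μ h (kernelPotential μ h v) u := by
        simp only [mutualEnergy_eq_lintegral_kernelPotential hh hPv hu, mul_comm]
    _ = ∫⁻ x, u x * (c * kernelPotential μ k v x) ∂μ := by
        simp only [mutualEnergy_comm hh_symm _ u,
          mutualEnergy_eq_lintegral_kernelPotential hh hu hPv, hpotential]
    _ = c * mutualEnergy μ k u v := by
        rw [mutualEnergy_eq_lintegral_kernelPotential hk hu hv, ← lintegral_const_mul' _ _ hc]
        exact lintegral_congr fun x => by ring

-- Up to the factor `c`, the mutual energy is the `L²` inner product of the potentials of `h`.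
lemma EnergyCauchySchwarz.of_factorization (hk : Measurable k.uncurry)
    (hh : Measurable h.uncurry) (hh_symm : ∀ x y, h x y = h y x) {c : ℝ≥0∞} (hc₀ : c ≠ 0)
    (hc : c ≠ ⊤) (hfact : ∀ x, ∀ᵐ y ∂μ, ∫⁻ z, h x z * h z y ∂μ = c * k x y) :
    EnergyCauchySchwarz μ k := by
  intro u v hu hv
  have hinner {u v : α → ℝ≥0∞} (hu : AEMeasurable u μ) (hv : AEMeasurable v μ) :=
    lintegral_kernelPotential_mul_kernelPotential hk hh hh_symm hc hfact hu hv
  have hcs := lintegral_mul_le_sqrt_lintegral_sq (aemeasurable_kernelPotential hh hu)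
    (aemeasurable_kernelPotential hh hv)
  simp only [sq, hinner hu hv, hinner hu hu, hinner hv hv] at hcs
  have hsqrt (U V : ℝ≥0∞) :
      (c * U * (c * V)) ^ (1 / 2 : ℝ) = c * (U * V) ^ (1 / 2 : ℝ) := by
    rw [mul_mul_mul_comm, ENNReal.mul_rpow_of_nonneg _ _ (by norm_num), ← sq,
      ← ENNReal.rpow_natCast_mul]
    norm_num
  rw [hsqrt] at hcs
  exact (ENNReal.mul_le_mul_iff_right hc₀ hc).1 hcs

end Factorization

section LocalConvergence

variable {α F : Type*} [MeasurableSpace α] [NormedAddCommGroup F] {μ : Measure α}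

lemma unifIntegrable_of_eLpNorm_le {ι : Type*} {f : ι → α → F} {p q : ℝ≥0∞} (hp : p ≠ 0)
    (hpq : p < q) (hf : ∀ n, AEStronglyMeasurable (f n) μ) {B : ℝ≥0∞} (hB : B ≠ ⊤)
    (hfB : ∀ n, eLpNorm (f n) q μ ≤ B) : UnifIntegrable f p μ := by
  set γ : ℝ := 1 / p.toReal - 1 / q.toReal
  have hγ : 0 < γ := by
    have h := ENNReal.toReal_strict_mono (by simpa) (ENNReal.inv_lt_inv.2 hpq)
    simpa [γ] using h
  have hlim : Tendsto (fun δ : ℝ => B * ENNReal.ofReal δ ^ γ) (nhdsWithin 0 (Set.Ioi 0))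
      (nhds 0) := by
    have hcont : Continuous fun δ : ℝ => B * ENNReal.ofReal δ ^ γ :=
      (ENNReal.continuous_const_mul hB).comp
        ((ENNReal.continuous_rpow_const (y := γ)).comp ENNReal.continuous_ofReal)
    refine Tendsto.mono_left ?_ nhdsWithin_le_nhds
    simpa [ENNReal.zero_rpow_of_pos hγ] using hcont.tendsto 0
  intro ε hε
  obtain ⟨δ, hδε, hδ⟩ := ((hlim.eventually_le_const (ENNReal.ofReal_pos.2 hε)).and
    self_mem_nhdsWithin).exists
  refine ⟨δ, hδ, fun n s hs hμs => ?_⟩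
  calc eLpNorm (s.indicator (f n)) p μ = eLpNorm (f n) p (μ.restrict s) :=
        eLpNorm_indicator_eq_eLpNorm_restrict hs
    _ ≤ eLpNorm (f n) q (μ.restrict s) * μ s ^ γ := by
        simpa only [Measure.restrict_apply_univ] using
          eLpNorm_le_eLpNorm_mul_rpow_measure_univ hpq.le ((hf n).restrict (s := s))
    _ ≤ B * ENNReal.ofReal δ ^ γ := by
        gcongr
        exact (eLpNorm_restrict_le _ _ _ _).trans (hfB n)
    _ ≤ ENNReal.ofReal ε := hδε

lemma tendsto_setLIntegral_sq_enorm_sub {f : ℕ → α → F} {f₀ : α → F} {p : ℝ≥0∞} (hp : 2 < p)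
    (hf : ∀ n, AEStronglyMeasurable (f n) μ)
    (hlim : ∀ᵐ x ∂μ, Tendsto (fun n => f n x) atTop (nhds (f₀ x))) {B : ℝ≥0∞} (hB : B ≠ ⊤)
    (hfB : ∀ n, eLpNorm (f n) p μ ≤ B) {s : Set α} (hs : μ s ≠ ⊤) :
    Tendsto (fun n => ∫⁻ x in s, ‖f n x - f₀ x‖ₑ ^ 2 ∂μ) atTop (nhds 0) := by
  have : Fact (μ s < ⊤) := ⟨hs.lt_top⟩
  have hf_s (n : ℕ) : AEStronglyMeasurable (f n) (μ.restrict s) := (hf n).restrict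
  have hlim_s := ae_restrict_of_ae (s := s) hlim
  have hfB_s (n : ℕ) : eLpNorm (f n) p (μ.restrict s) ≤ B :=
    (eLpNorm_restrict_le _ _ _ _).trans (hfB n)
  have hf₀ : MemLp f₀ p (μ.restrict s) := by
    refine ⟨aestronglyMeasurable_of_tendsto_ae atTop hf_s hlim_s, lt_of_le_of_lt ?_ hB.lt_top⟩
    calc eLpNorm f₀ p (μ.restrict s)
        ≤ liminf (fun n => eLpNorm (f n) p (μ.restrict s)) atTop :=
          Lp.eLpNorm_lim_le_liminf_eLpNorm hf_s f₀ hlim_s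
      _ ≤ liminf (fun _ : ℕ => B) atTop := liminf_le_liminf (.of_forall hfB_s)
      _ = B := liminf_const B
  have hvitali := tendsto_Lp_finite_of_tendsto_ae one_le_two ofNat_ne_top hf_s
    (hf₀.mono_exponent hp.le) (unifIntegrable_of_eLpNorm_le two_ne_zero hp hf_s hB hfB_s) hlim_s
  have hsq := ((ENNReal.continuous_pow 2).tendsto 0).comp hvitali
  rw [zero_pow two_ne_zero] at hsq
  refine hsq.congr fun n => ?_
  have h := eLpNorm_nnreal_pow_eq_lintegral (f := f n - f₀) (μ := μ.restrict s) (p := 2) two_ne_zero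
  simpa using h

end LocalConvergence

/-- The Riesz kernel `‖x - y‖ ^ (-s)`. On the diagonal the real power `0 ^ (-s)` is the junk value
`0` when `s ≠ 0`, which is harmless because the diagonal is a null set. -/
def rieszKernel {E : Type*} [NormedAddCommGroup E] (s : ℝ) (x y : E) : ℝ≥0∞ :=
  ENNReal.ofReal (‖x - y‖ ^ (-s))

section RieszKernel

variable {E : Type*} [NormedAddCommGroup E] {s : ℝ}

lemma rieszKernel_comm (x y : E) : rieszKernel s x y = rieszKernel s y x := by
  rw [rieszKernel, rieszKernel, norm_sub_rev]

lemma rieszKernel_sub_sub (x y z : E) :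
    rieszKernel s (x - z) (y - z) = rieszKernel s x y := by
  rw [rieszKernel, rieszKernel, sub_sub_sub_cancel_right]

lemma rieszKernel_smul_smul [NormedSpace ℝ E] {r : ℝ} (hr : 0 < r) (x y : E) :
    rieszKernel s (r • x) (r • y) = ENNReal.ofReal (r ^ (-s)) * rieszKernel s x y := by
  rw [rieszKernel, rieszKernel, ← smul_sub, norm_smul, Real.norm_of_nonneg hr.le,
    Real.mul_rpow hr.le (norm_nonneg _), ENNReal.ofReal_mul (by positivity)]

lemma rieszKernel_pos {x y : E} (hxy : x ≠ y) : 0 < rieszKernel s x y :=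
  ENNReal.ofReal_pos.2 (Real.rpow_pos_of_pos (norm_pos_iff.2 (sub_ne_zero.2 hxy)) _)

lemma measurable_uncurry_rieszKernel [MeasurableSpace E] [BorelSpace E]
    [SecondCountableTopology E] : Measurable (rieszKernel s : E → E → ℝ≥0∞).uncurry := by
  unfold rieszKernel Function.uncurry
  fun_prop

lemma rieszKernel_mul_rieszKernel_le_of_norm_eq_two {a b : ℝ} (ha : 0 ≤ a) (hb : 0 ≤ b)
    {v : E} (hv : ‖v‖ = 2) (z : E) : rieszKernel a v z * rieszKernel b z 0 ≤
      ENNReal.ofReal (‖v - z‖ ^ (-a) * max ‖v - z‖ 1 ^ (-b)) +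
        ENNReal.ofReal (‖z‖ ^ (-b) * max ‖z‖ 1 ^ (-a)) := by
  have htri : 2 ≤ ‖v - z‖ + ‖z‖ := by simpa [hv] using norm_add_le (v - z) z
  rw [rieszKernel, rieszKernel, sub_zero, ← ENNReal.ofReal_mul (by positivity)]
  rcases le_total ‖v - z‖ ‖z‖ with hle | hle
  · have hmax : max ‖v - z‖ 1 ≤ ‖z‖ := max_le hle (by linarith)
    refine le_add_right (ENNReal.ofReal_le_ofReal (mul_le_mul_of_nonneg_left ?_ (by positivity)))
    exact Real.rpow_le_rpow_of_nonpos (by positivity) hmax (by linarith)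
  · have hmax : max ‖z‖ 1 ≤ ‖v - z‖ := max_le hle (by linarith)
    rw [mul_comm]
    refine le_add_left (ENNReal.ofReal_le_ofReal (mul_le_mul_of_nonneg_left ?_ (by positivity)))
    exact Real.rpow_le_rpow_of_nonpos (by positivity) hmax (by linarith)

lemma rieszKernel_le_of_two_mul_le (hs : 0 ≤ s) {ρ R : ℝ} (hρR : 2 * ρ ≤ R) {x y z : E}
    (hx : x ∉ Metric.ball 0 R) (hy : y ∈ Metric.ball 0 ρ) (hz : z ∈ Metric.ball 0 R) :
    rieszKernel s x y ≤ ENNReal.ofReal (4 ^ s) * rieszKernel s x z := by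
  have hxz_pos : 0 < ‖x - z‖ :=
    norm_pos_iff.2 (sub_ne_zero.2 fun hxz => hx (hxz ▸ hz))
  simp only [mem_ball_zero_iff, not_lt] at hx hy hz
  have hxy : ‖x‖ ≤ ‖x - y‖ + ‖y‖ := by simpa using norm_add_le (x - y) y
  have hxz : ‖x - z‖ ≤ 4 * ‖x - y‖ := by linarith [norm_sub_le x z]
  rw [rieszKernel, rieszKernel, ← ENNReal.ofReal_mul (by positivity)]
  refine ENNReal.ofReal_le_ofReal ?_
  calc ‖x - y‖ ^ (-s) ≤ (‖x - z‖ / 4) ^ (-s) :=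
        Real.rpow_le_rpow_of_nonpos (by positivity) (by linarith) (by linarith)
    _ = 4 ^ s * ‖x - z‖ ^ (-s) := by
        rw [Real.div_rpow (norm_nonneg _) zero_le_four, Real.rpow_neg zero_le_four,
          div_inv_eq_mul, mul_comm]

end RieszKernel

section Integrability

variable {E : Type*} [NormedAddCommGroup E] [NormedSpace ℝ E] [FiniteDimensional ℝ E]
  [MeasurableSpace E] [BorelSpace E] {μ : Measure E} [μ.IsAddHaarMeasure]

lemma lintegral_eq_ofReal_pow_mul_lintegral_comp_smul (f : E → ℝ≥0∞) {r : ℝ} (hr : 0 < r) :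
    ∫⁻ x, f x ∂μ = ENNReal.ofReal (r ^ Module.finrank ℝ E) * ∫⁻ x, f (r • x) ∂μ := by
  have hemb : MeasurableEmbedding (r • · : E → E) :=
    (Homeomorph.smulOfNeZero r hr.ne').measurableEmbedding
  have hpow : 0 < r ^ Module.finrank ℝ E := pow_pos hr _
  rw [← hemb.lintegral_map, Measure.map_addHaar_smul μ hr.ne', lintegral_smul_measure,
    smul_eq_mul, ← mul_assoc, ← ENNReal.ofReal_mul hpow.le, abs_of_pos (inv_pos.2 hpow),
    mul_inv_cancel₀ hpow.ne', ENNReal.ofReal_one, one_mul]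

lemma setLIntegral_ball_norm_rpow_neg_lt_top [Nontrivial E] {s : ℝ}
    (hs : s < Module.finrank ℝ E) (r : ℝ) :
    ∫⁻ x in Metric.ball (0 : E) r, ENNReal.ofReal (‖x‖ ^ (-s)) ∂μ < ⊤ := by
  have hintegrable : IntegrableOn (fun x : E => ‖x‖ ^ (-s)) (Metric.ball 0 r) μ := by
    refine integrableOn_ball_of_norm_le_rpow (C := 1) Module.finrank_pos hs
      (.of_forall fun x => ?_) (measurable_norm.pow_const (-s)).aestronglyMeasurable
    rw [one_mul, Real.norm_of_nonneg (by positivity)]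
  exact hintegrable.setLIntegral_lt_top

lemma setLIntegral_compl_ball_norm_rpow_neg_lt_top {t : ℝ} (ht : Module.finrank ℝ E < t) :
    ∫⁻ x in (Metric.ball (0 : E) 1)ᶜ, ENNReal.ofReal (‖x‖ ^ (-t)) ∂μ < ⊤ := by
  have ht₀ : 0 ≤ t := (Nat.cast_nonneg _).trans ht.le
  have hle (x : E) (hx : x ∈ (Metric.ball (0 : E) 1)ᶜ) : ENNReal.ofReal (‖x‖ ^ (-t)) ≤
      ENNReal.ofReal (2 ^ t) * ENNReal.ofReal ((1 + ‖x‖) ^ (-t)) := by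
    have hx1 : 1 ≤ ‖x‖ := by simpa using hx
    rw [← ENNReal.ofReal_mul (by positivity)]
    refine ENNReal.ofReal_le_ofReal ?_
    calc ‖x‖ ^ (-t) ≤ ((1 + ‖x‖) / 2) ^ (-t) :=
          Real.rpow_le_rpow_of_nonpos (by positivity) (by linarith) (neg_nonpos.2 ht₀)
      _ = 2 ^ t * (1 + ‖x‖) ^ (-t) := by
          rw [Real.div_rpow (by positivity) zero_le_two, Real.rpow_neg zero_le_two, div_inv_eq_mul,
            mul_comm]
  calc ∫⁻ x in (Metric.ball (0 : E) 1)ᶜ, ENNReal.ofReal (‖x‖ ^ (-t)) ∂μ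
      ≤ ∫⁻ x in (Metric.ball (0 : E) 1)ᶜ,
          ENNReal.ofReal (2 ^ t) * ENNReal.ofReal ((1 + ‖x‖) ^ (-t)) ∂μ :=
        setLIntegral_mono' Metric.isOpen_ball.measurableSet.compl hle
    _ ≤ ∫⁻ x, ENNReal.ofReal (2 ^ t) * ENNReal.ofReal ((1 + ‖x‖) ^ (-t)) ∂μ :=
        setLIntegral_le_lintegral _ _
    _ = ENNReal.ofReal (2 ^ t) * ∫⁻ x, ENNReal.ofReal ((1 + ‖x‖) ^ (-t)) ∂μ :=
        lintegral_const_mul' _ _ ofReal_ne_top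
    _ < ⊤ := mul_lt_top ofReal_lt_top (finite_integral_one_add_norm ht)

lemma lintegral_norm_rpow_neg_mul_max_rpow_neg_lt_top [Nontrivial E] {a b : ℝ}
    (ha : a < Module.finrank ℝ E) (hab : Module.finrank ℝ E < a + b) :
    ∫⁻ x : E, ENNReal.ofReal (‖x‖ ^ (-a) * max ‖x‖ 1 ^ (-b)) ∂μ < ⊤ := by
  have hball : MeasurableSet (Metric.ball (0 : E) 1) := Metric.isOpen_ball.measurableSet
  rw [← lintegral_add_compl _ hball]
  refine add_lt_top.2 ⟨?_, ?_⟩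
  · refine (setLIntegral_mono' hball fun x hx => ENNReal.ofReal_le_ofReal (le_of_eq ?_)).trans_lt
      (setLIntegral_ball_norm_rpow_neg_lt_top ha 1)
    have hx1 : ‖x‖ ≤ 1 := (mem_ball_zero_iff.1 hx).le
    rw [max_eq_right hx1, Real.one_rpow, mul_one]
  · refine (setLIntegral_mono' hball.compl fun x hx => ENNReal.ofReal_le_ofReal
      (le_of_eq ?_)).trans_lt (setLIntegral_compl_ball_norm_rpow_neg_lt_top hab)
    have hx1 : 1 ≤ ‖x‖ := by simpa using hx
    rw [max_eq_left hx1, ← Real.rpow_add (by linarith)]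
    ring_nf

end Integrability

section Composition

variable {E : Type*} [NormedAddCommGroup E] [InnerProductSpace ℝ E] [FiniteDimensional ℝ E]
  [MeasurableSpace E] [BorelSpace E] {a b : ℝ}

lemma lintegral_rieszKernel_mul_rieszKernel_sub (x y : E) :
    ∫⁻ z, rieszKernel a (x - y) z * rieszKernel b z 0 =
      ∫⁻ z, rieszKernel a x z * rieszKernel b z y := by
  rw [← lintegral_sub_right_eq_self (fun z => rieszKernel a (x - y) z * rieszKernel b z 0) y]
  simp only [rieszKernel_sub_sub, ← sub_self y]

lemma lintegral_rieszKernel_mul_rieszKernel_smul {r : ℝ} (hr : 0 < r) (v : E) :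
    ∫⁻ z, rieszKernel a (r • v) z * rieszKernel b z 0 =
      ENNReal.ofReal (r ^ (Module.finrank ℝ E - a - b)) *
        ∫⁻ z, rieszKernel a v z * rieszKernel b z 0 := by
  have hscale (z : E) : rieszKernel a (r • v) (r • z) * rieszKernel b (r • z) 0 =
      ENNReal.ofReal (r ^ (-a) * r ^ (-b)) * (rieszKernel a v z * rieszKernel b z 0) := by
    have hb := rieszKernel_smul_smul (s := b) hr z 0
    rw [smul_zero] at hb
    rw [rieszKernel_smul_smul hr, hb, mul_mul_mul_comm, ENNReal.ofReal_mul (by positivity)]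
  rw [lintegral_eq_ofReal_pow_mul_lintegral_comp_smul _ hr]
  simp only [hscale]
  rw [lintegral_const_mul' _ _ ofReal_ne_top, ← mul_assoc, ← ENNReal.ofReal_mul (by positivity),
    ← Real.rpow_add hr, ← Real.rpow_natCast, ← Real.rpow_add hr]
  ring_nf

lemma lintegral_rieszKernel_mul_rieszKernel_of_norm_eq {v w : E} (hvw : ‖v‖ = ‖w‖) :
    ∫⁻ z, rieszKernel a v z * rieszKernel b z 0 =
      ∫⁻ z, rieszKernel a w z * rieszKernel b z 0 := by
  set L : E ≃ₗᵢ[ℝ] E := (Submodule.span ℝ {w - v})ᗮ.reflection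
  have hLw : L w = v := Submodule.reflection_sub hvw.symm
  rw [← L.measurePreserving.lintegral_comp_emb L.toHomeomorph.measurableEmbedding]
  refine lintegral_congr fun z => ?_
  simp only [rieszKernel, sub_zero, L.norm_map, ← hLw, ← map_sub]

variable [Nontrivial E]

lemma lintegral_rieszKernel_mul_rieszKernel_lt_top (ha : a < Module.finrank ℝ E)
    (hb : b < Module.finrank ℝ E) (hab : Module.finrank ℝ E < a + b) {v : E} (hv : ‖v‖ = 2) :
    ∫⁻ z, rieszKernel a v z * rieszKernel b z 0 < ⊤ := by
  set φ : ℝ → ℝ → E → ℝ≥0∞ := fun s t w => ENNReal.ofReal (‖w‖ ^ (-s) * max ‖w‖ 1 ^ (-t))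
  have hφ_meas : Measurable (φ b a) := by fun_prop
  calc ∫⁻ z, rieszKernel a v z * rieszKernel b z 0
      ≤ ∫⁻ z, φ a b (v - z) + φ b a z := lintegral_mono fun z =>
        rieszKernel_mul_rieszKernel_le_of_norm_eq_two (by linarith) (by linarith) hv z
    _ = (∫⁻ z, φ a b z) + ∫⁻ z, φ b a z := by
        rw [lintegral_add_right _ hφ_meas, lintegral_sub_left_eq_self]
    _ < ⊤ := add_lt_top.2 ⟨lintegral_norm_rpow_neg_mul_max_rpow_neg_lt_top ha hab,
        lintegral_norm_rpow_neg_mul_max_rpow_neg_lt_top hb (by rwa [add_comm])⟩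

lemma lintegral_rieszKernel_mul_rieszKernel_ne_zero (x y : E) :
    ∫⁻ z, rieszKernel a x z * rieszKernel b z y ≠ 0 := by
  have hmeas : Measurable fun z => rieszKernel a x z * rieszKernel b z y :=
    measurable_uncurry_rieszKernel.of_uncurry_left.mul
      measurable_uncurry_rieszKernel.of_uncurry_right
  rw [Ne, lintegral_eq_zero_iff hmeas]
  intro hzero
  obtain ⟨z, hz, hzx, hzy⟩ :=
    (hzero.and ((Measure.ae_ne volume x).and (Measure.ae_ne volume y))).exists
  exact mul_ne_zero (rieszKernel_pos hzx.symm).ne' (rieszKernel_pos hzy).ne' hz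

lemma exists_lintegral_rieszKernel_mul_rieszKernel_eq (ha : a < Module.finrank ℝ E)
    (hb : b < Module.finrank ℝ E) (hab : Module.finrank ℝ E < a + b) :
    ∃ c : ℝ≥0∞, c ≠ 0 ∧ c ≠ ⊤ ∧ ∀ x y : E, x ≠ y →
      ∫⁻ z, rieszKernel a x z * rieszKernel b z y =
        c * rieszKernel (a + b - Module.finrank ℝ E) x y := by
  obtain ⟨e, he⟩ := exists_norm_eq E zero_le_two
  set t : ℝ := a + b - Module.finrank ℝ E
  set c₂ : ℝ≥0∞ := ∫⁻ z, rieszKernel a e z * rieszKernel b z 0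
  refine ⟨ENNReal.ofReal (2⁻¹ ^ (-t)) * c₂,
    mul_ne_zero (ENNReal.ofReal_pos.2 (by positivity)).ne'
      (lintegral_rieszKernel_mul_rieszKernel_ne_zero e 0),
    mul_ne_top ofReal_ne_top (lintegral_rieszKernel_mul_rieszKernel_lt_top ha hb hab he).ne,
    fun x y hxy => ?_⟩
  have hr : 0 < ‖x - y‖ := norm_pos_iff.2 (sub_ne_zero.2 hxy)
  have hnorm : ‖x - y‖ = ‖(‖x - y‖ * 2⁻¹) • e‖ := by
    rw [norm_smul, he, Real.norm_of_nonneg (by positivity), mul_assoc]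
    norm_num
  rw [← lintegral_rieszKernel_mul_rieszKernel_sub,
    lintegral_rieszKernel_mul_rieszKernel_of_norm_eq hnorm,
    lintegral_rieszKernel_mul_rieszKernel_smul (by positivity),
    show Module.finrank ℝ E - a - b = -t by simp only [t]; ring,
    Real.mul_rpow (norm_nonneg _) (by norm_num), ENNReal.ofReal_mul (by positivity), rieszKernel]
  ring

theorem energyCauchySchwarz_rieszKernel {s : ℝ} (hs₀ : 0 < s) (hs : s < Module.finrank ℝ E) :
    EnergyCauchySchwarz volume (rieszKernel s : E → E → ℝ≥0∞) := by
  set a : ℝ := (Module.finrank ℝ E + s) / 2 with ha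
  obtain ⟨c, hc₀, hc, hcomp⟩ := exists_lintegral_rieszKernel_mul_rieszKernel_eq (E := E)
    (a := a) (b := a) (by linarith) (by linarith) (by linarith)
  rw [ha, add_halves, add_sub_cancel_left] at hcomp
  refine .of_factorization (h := rieszKernel a) measurable_uncurry_rieszKernel
    measurable_uncurry_rieszKernel rieszKernel_comm hc₀ hc fun x => ?_
  filter_upwards [Measure.ae_ne volume x] with y hy using hcomp x y hy.symm

end Composition

section FarField

variable {E : Type*} [NormedAddCommGroup E] [NormedSpace ℝ E] [FiniteDimensional ℝ E]
  [MeasurableSpace E] [BorelSpace E] {μ : Measure E} [μ.IsAddHaarMeasure] {s : ℝ}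

lemma kernelPotential_rieszKernel_indicator_le (hs : 0 ≤ s) {r : ℝ} (hr : 0 < r) {S : Set E}
    (hS : MeasurableSet S) (x : E) :
    kernelPotential μ (rieszKernel s) (S.indicator 1) x ≤
      ∫⁻ w in Metric.ball 0 r, ENNReal.ofReal (‖w‖ ^ (-s)) ∂μ +
        ENNReal.ofReal (r ^ (-s)) * μ S := by
  set near : E → ℝ≥0∞ := (Metric.ball 0 r).indicator fun w => ENNReal.ofReal (‖w‖ ^ (-s))
  have hball : MeasurableSet (Metric.ball (0 : E) r) := Metric.isOpen_ball.measurableSet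
  have hle (y : E) : rieszKernel s x y ≤ near (x - y) + ENNReal.ofReal (r ^ (-s)) := by
    by_cases hy : x - y ∈ Metric.ball 0 r
    · simp [near, hy, rieszKernel]
    · have hr_le : r ≤ ‖x - y‖ := by simpa using hy
      exact le_add_left (ENNReal.ofReal_le_ofReal
        (Real.rpow_le_rpow_of_nonpos hr hr_le (neg_nonpos.2 hs)))
  calc kernelPotential μ (rieszKernel s) (S.indicator 1) x
      ≤ ∫⁻ y in S, near (x - y) + ENNReal.ofReal (r ^ (-s)) ∂μ := by
        rw [kernelPotential_indicator_one hS]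
        exact lintegral_mono hle
    _ = ∫⁻ y in S, near (x - y) ∂μ + ENNReal.ofReal (r ^ (-s)) * μ S := by
        rw [lintegral_add_right _ measurable_const, setLIntegral_const]
    _ ≤ ∫⁻ w, near w ∂μ + ENNReal.ofReal (r ^ (-s)) * μ S := by
        rw [← lintegral_sub_left_eq_self near x]
        exact add_le_add_left (setLIntegral_le_lintegral S _) _
    _ = _ := by rw [lintegral_indicator hball]

lemma mutualEnergy_rieszKernel_indicator_le (hs : 0 ≤ s) {r : ℝ} (hr : 0 < r) {S : Set E}
    (hS : MeasurableSet S) :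
    mutualEnergy μ (rieszKernel s) (S.indicator 1) (S.indicator 1) ≤
      (∫⁻ w in Metric.ball 0 r, ENNReal.ofReal (‖w‖ ^ (-s)) ∂μ) * μ S +
        ENNReal.ofReal (r ^ (-s)) * μ S ^ 2 := by
  have hmeas : AEMeasurable (S.indicator (1 : E → ℝ≥0∞)) μ :=
    (measurable_one.indicator hS).aemeasurable
  rw [mutualEnergy_eq_lintegral_kernelPotential measurable_uncurry_rieszKernel hmeas hmeas]
  grw [lintegral_mono fun x =>
    mul_le_mul_right (kernelPotential_rieszKernel_indicator_le hs hr hS x) (S.indicator 1 x)]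
  rw [lintegral_mul_const'' _ hmeas, lintegral_indicator_one hS]
  exact le_of_eq (by ring)

lemma tendsto_mutualEnergy_rieszKernel_indicator_div_sq [Nontrivial E] (hs₀ : 0 < s)
    (hs : s < Module.finrank ℝ E) {ι : Type*} {l : Filter ι} {S : ι → Set E}
    (hS : ∀ i, MeasurableSet (S i)) (hS_fin : ∀ i, μ (S i) ≠ ⊤)
    (hS_lim : Tendsto (fun i => μ (S i)) l (nhds ⊤)) :
    Tendsto (fun i => mutualEnergy μ (rieszKernel s) ((S i).indicator 1) ((S i).indicator 1) /
      μ (S i) ^ 2) l (nhds 0) := by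
  set C : ℝ → ℝ≥0∞ := fun r => ∫⁻ w in Metric.ball (0 : E) r, ENNReal.ofReal (‖w‖ ^ (-s)) ∂μ
  have hC (r : ℝ) : C r ≠ ⊤ := (setLIntegral_ball_norm_rpow_neg_lt_top hs r).ne
  have hdecay : Tendsto (fun r : ℝ => ENNReal.ofReal (r ^ (-s))) atTop (nhds 0) := by
    simpa using ENNReal.tendsto_ofReal (tendsto_rpow_neg_atTop hs₀)
  refine tendsto_zero_of_forall_le_add (b := fun r i => C r / μ (S i)) ?_ (fun r => ?_) hdecay
  · filter_upwards [eventually_gt_atTop 0] with r hr i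
    refine ENNReal.div_le_of_le_mul' ?_
    grw [mutualEnergy_rieszKernel_indicator_le hs₀.le hr (hS i)]
    rcases eq_or_ne (μ (S i)) 0 with hzero | hpos
    · simp [hzero]
    · rw [mul_add, mul_comm (C r), sq, mul_assoc, ENNReal.mul_div_cancel hpos (hS_fin i),
        mul_comm (ENNReal.ofReal _)]
  · simpa using ENNReal.Tendsto.const_div hS_lim (.inr (hC r))

lemma tendsto_measure_ball_atTop [Nontrivial E] :
    Tendsto (fun R : ℕ => μ (Metric.ball (0 : E) R)) atTop (nhds ⊤) := by
  have hmono : Monotone fun R : ℕ => Metric.ball (0 : E) R :=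
    fun R R' hR => Metric.ball_subset_ball (by exact_mod_cast hR)
  have hlim := tendsto_measure_iUnion_atTop (μ := μ) hmono
  rwa [Metric.iUnion_ball_nat, measure_univ_of_isAddLeftInvariant] at hlim

lemma kernelPotential_rieszKernel_indicator_ball_le (hs : 0 ≤ s) {ρ R : ℝ} (hR : 0 < R)
    (hρR : 2 * ρ ≤ R) (x : E) :
    kernelPotential μ (rieszKernel s) ((Metric.ball 0 ρ).indicator 1) x ≤
      (Metric.ball 0 R).indicator (fun _ =>
          ∫⁻ w in Metric.ball 0 1, ENNReal.ofReal (‖w‖ ^ (-s)) ∂μ + μ (Metric.ball 0 ρ)) x +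
        ENNReal.ofReal (4 ^ s) * μ (Metric.ball 0 ρ) *
          (kernelPotential μ (rieszKernel s) ((Metric.ball 0 R).indicator 1) x /
            μ (Metric.ball 0 R)) := by
  have hball (t : ℝ) : MeasurableSet (Metric.ball (0 : E) t) := Metric.isOpen_ball.measurableSet
  by_cases hx : x ∈ Metric.ball 0 R
  · rw [Set.indicator_of_mem hx]
    exact le_add_right (by
      simpa using kernelPotential_rieszKernel_indicator_le (μ := μ) hs one_pos (hball ρ) x)
  · rw [Set.indicator_of_notMem hx, zero_add, ← mul_div_assoc,
      ENNReal.le_div_iff_mul_le (.inl (Metric.measure_ball_pos μ 0 hR).ne')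
        (.inl measure_ball_lt_top.ne)]
    exact kernelPotential_indicator_mul_measure_le (hball ρ) (hball R)
      measurable_uncurry_rieszKernel.of_uncurry_left
      fun y hy z hz => rieszKernel_le_of_two_mul_le hs hρR hx hy hz

lemma mutualEnergy_rieszKernel_indicator_ball_le (hs : 0 ≤ s) {ρ R : ℝ} (hR : 0 < R)
    (hρR : 2 * ρ ≤ R) {u : E → ℝ≥0∞} (hu : AEMeasurable u μ) :
    mutualEnergy μ (rieszKernel s) u ((Metric.ball 0 ρ).indicator 1) ≤
      (∫⁻ w in Metric.ball 0 1, ENNReal.ofReal (‖w‖ ^ (-s)) ∂μ + μ (Metric.ball 0 ρ)) *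
          ∫⁻ x in Metric.ball 0 R, u x ∂μ +
        ENNReal.ofReal (4 ^ s) * μ (Metric.ball 0 ρ) *
          (mutualEnergy μ (rieszKernel s) u ((Metric.ball 0 R).indicator 1) /
            μ (Metric.ball 0 R)) := by
  have hball (t : ℝ) : MeasurableSet (Metric.ball (0 : E) t) := Metric.isOpen_ball.measurableSet
  have hind (t : ℝ) : AEMeasurable ((Metric.ball (0 : E) t).indicator (1 : E → ℝ≥0∞)) μ :=
    (measurable_one.indicator (hball t)).aemeasurable
  have hk : Measurable (rieszKernel s : E → E → ℝ≥0∞).uncurry := measurable_uncurry_rieszKernel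
  have hnear (C : ℝ≥0∞) : ∫⁻ x, u x * (Metric.ball 0 R).indicator (fun _ => C) x ∂μ =
      C * ∫⁻ x in Metric.ball 0 R, u x ∂μ := by
    rw [← lintegral_const_mul'' _ hu.restrict, ← lintegral_indicator (hball R)]
    refine lintegral_congr fun x => ?_
    by_cases hx : x ∈ Metric.ball 0 R <;> simp [hx, mul_comm]
  have hfar (c m : ℝ≥0∞) {w : E → ℝ≥0∞} (hw : AEMeasurable w μ) :
      ∫⁻ x, u x * (c * (w x / m)) ∂μ = c * ((∫⁻ x, u x * w x ∂μ) / m) := by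
    simp only [div_eq_mul_inv]
    rw [← lintegral_mul_const'' _ (hu.fun_mul hw),
      ← lintegral_const_mul'' _ ((hu.fun_mul hw).mul_const _)]
    exact lintegral_congr fun x => by ring
  simp only [mutualEnergy_eq_lintegral_kernelPotential hk hu (hind _)]
  rw [← hnear, ← hfar _ _ (aemeasurable_kernelPotential hk (hind R)), ← lintegral_add_left'
    (hu.fun_mul (measurable_const.indicator (hball R)).aemeasurable)]
  refine lintegral_mono fun x => ?_
  grw [kernelPotential_rieszKernel_indicator_ball_le hs hR hρR x, mul_add]

lemma tendsto_mutualEnergy_rieszKernel_indicator_ball [Nontrivial E] (hs₀ : 0 < s)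
    (hs : s < Module.finrank ℝ E)
    (hk_cs : EnergyCauchySchwarz μ (rieszKernel s : E → E → ℝ≥0∞)) {ι : Type*} {l : Filter ι}
    {u : ι → E → ℝ≥0∞} (hu : ∀ n, AEMeasurable (u n) μ) {M : ℝ≥0∞} (hM : M ≠ ⊤)
    (hu_le : ∀ n, mutualEnergy μ (rieszKernel s) (u n) (u n) ≤ M)
    (hu_loc : ∀ R : ℝ, Tendsto (fun n => ∫⁻ x in Metric.ball 0 R, u n x ∂μ) l (nhds 0))
    (ρ : ℝ) :
    Tendsto (fun n => mutualEnergy μ (rieszKernel s) (u n) ((Metric.ball 0 ρ).indicator 1))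
      l (nhds 0) := by
  set B : ℝ → Set E := Metric.ball 0
  set D : (E → ℝ≥0∞) → (E → ℝ≥0∞) → ℝ≥0∞ := mutualEnergy μ (rieszKernel s)
  have hball (R : ℝ) : MeasurableSet (B R) := Metric.isOpen_ball.measurableSet
  set C : ℝ≥0∞ := ∫⁻ w in B 1, ENNReal.ofReal (‖w‖ ^ (-s)) ∂μ + μ (B ρ)
  set c : ℝ≥0∞ := ENNReal.ofReal (4 ^ s) * μ (B ρ)
  have hC : C ≠ ⊤ := add_ne_top.2
    ⟨(setLIntegral_ball_norm_rpow_neg_lt_top hs 1).ne, measure_ball_lt_top.ne⟩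
  have hc : c ≠ ⊤ := mul_ne_top ofReal_ne_top measure_ball_lt_top.ne
  have hcs (R : ℝ) (n : ι) : D (u n) ((B R).indicator 1) / μ (B R) ≤
      (M * (D ((B R).indicator 1) ((B R).indicator 1) / μ (B R) ^ 2)) ^ (1 / 2 : ℝ) := by
    have hind : Measurable ((B R).indicator (1 : E → ℝ≥0∞)) := measurable_one.indicator (hball R)
    grw [← hu_le n]
    exact hk_cs.mutualEnergy_div_le (hu n) hind.aemeasurable _
  have htail : Tendsto (fun R : ℕ => c * (M * (D ((B R).indicator 1) ((B R).indicator 1) /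
      μ (B R) ^ 2)) ^ (1 / 2 : ℝ)) atTop (nhds 0) := by
    have hself := tendsto_mutualEnergy_rieszKernel_indicator_div_sq hs₀ hs
      (fun R : ℕ => hball R) (fun R => measure_ball_lt_top.ne) (tendsto_measure_ball_atTop (μ := μ))
    have h := ENNReal.Tendsto.const_mul
      ((ENNReal.Tendsto.const_mul hself (.inr hM)).ennrpow_const (1 / 2)) (.inr hc)
    rwa [mul_zero, ENNReal.zero_rpow_of_pos (by norm_num), mul_zero] at h
  refine tendsto_zero_of_forall_le_add (b := fun (R : ℕ) n => C * ∫⁻ x in B R, u n x ∂μ) ?_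
    (fun R => by simpa using ENNReal.Tendsto.const_mul (hu_loc R) (.inr hC)) htail
  filter_upwards [eventually_gt_atTop 0, eventually_ge_atTop ⌈2 * ρ⌉₊] with R hR hρR n
  grw [← hcs R n]
  exact mutualEnergy_rieszKernel_indicator_ball_le hs₀.le (by exact_mod_cast hR)
    (Nat.ceil_le.1 hρR) (hu n)

end FarField

theorem nonlocal_brezis_lieb_general {E F : Type*} [NormedAddCommGroup E]
    [InnerProductSpace ℝ E] [FiniteDimensional ℝ E] [MeasurableSpace E] [BorelSpace E]
    [NormedAddCommGroup F] {s : ℝ} (hs₀ : 0 < s) (hs : s < Module.finrank ℝ E) {p : ℝ≥0∞}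
    (hp : 2 < p) {f : ℕ → E → F} {f₀ : E → F}
    (hf : ∀ n, AEStronglyMeasurable (f n))
    (hlim : ∀ᵐ x, Tendsto (fun n => f n x) atTop (nhds (f₀ x)))
    {M : ℝ≥0∞} (hM : M ≠ ⊤) (hfM : ∀ n, kernelEnergy volume (rieszKernel s) (f n) ≤ M)
    {B : ℝ≥0∞} (hB : B ≠ ⊤) (hfB : ∀ n, eLpNorm (f n) p ≤ B) :
    Tendsto (fun n => (kernelEnergy volume (rieszKernel s) (f n)).toReal
      - (kernelEnergy volume (rieszKernel s) (fun x => f n x - f₀ x)).toReal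
      - (kernelEnergy volume (rieszKernel s) f₀).toReal) atTop (nhds 0) := by
  have : Nontrivial E := Module.nontrivial_of_finrank_pos (R := ℝ) (by exact_mod_cast hs₀.trans hs)
  have hk : Measurable (rieszKernel s : E → E → ℝ≥0∞).uncurry := measurable_uncurry_rieszKernel
  have hk_cs := energyCauchySchwarz_rieszKernel (E := E) hs₀ hs
  have hf₀ : AEStronglyMeasurable f₀ := aestronglyMeasurable_of_tendsto_ae atTop hf hlim
  have hf₀M := kernelEnergy_le_of_tendsto_ae hk hf hlim hfM
  have hdiff_le (n : ℕ) :
      kernelEnergy volume (rieszKernel s) (fun x => f n x - f₀ x) ≤ 12 * (M + M) := by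
    grw [hk_cs.kernelEnergy_sub_le hk rieszKernel_comm (hf n) hf₀, hfM n, hf₀M]
  have hdiff (n : ℕ) : AEMeasurable fun x => ‖f n x - f₀ x‖ₑ ^ 2 :=
    ((hf n).sub hf₀).enorm.pow_const 2
  have hloc (R : ℝ) := tendsto_setLIntegral_sq_enorm_sub hp hf hlim hB hfB
    (measure_ball_lt_top (x := (0 : E)) (r := R)).ne
  have h12M : 12 * (M + M) ≠ ⊤ := by finiteness
  have hexhaust (x : E) : ∀ᶠ j : ℕ in atTop, x ∈ Metric.ball 0 j := by
    simpa using tendsto_natCast_atTop_atTop.eventually_gt_atTop ‖x‖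
  have hmutual := hk_cs.tendsto_mutualEnergy_zero hk hdiff h12M hdiff_le
    (fun j : ℕ => Metric.isOpen_ball.measurableSet) hexhaust
    (fun j => tendsto_mutualEnergy_rieszKernel_indicator_ball hs₀ hs hk_cs hdiff h12M hdiff_le
      hloc j)
    (hf₀.enorm.pow_const 2) (fun x => by finiteness) (ne_top_of_le_ne_top hM hf₀M)
  exact tendsto_toReal_kernelEnergy_sub_sub hk rieszKernel_comm hf hf₀ h12M hdiff_le
    (ne_top_of_le_ne_top hM hf₀M) hmutual

lemma rieszEnergy_eq_kernelEnergy (d : ℕ) (lam : ℝ) {g : EuclideanSpace ℝ (Fin d) → ℂ}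
    (hg : AEStronglyMeasurable g) :
    rieszEnergy d lam g = kernelEnergy volume (rieszKernel lam) g := by
  have hg_sq : AEMeasurable fun x => ‖g x‖ₑ ^ 2 := hg.enorm.pow_const 2
  exact (lintegral_prod _
    (aemeasurable_mul_mul_kernel measurable_uncurry_rieszKernel hg_sq hg_sq)).symm

/-- Non-local Brézis–Lieb lemma for the Riesz energy: if `f_n → f` a.e., the Riesz energies
`I_λ(f_n)` are uniformly bounded and the `L^p` norms of `f_n` are uniformly bounded
(`2 < p < ∞`), then `I_λ(f_n) = I_λ(f) + I_λ(f_n - f) + o(1)`. -/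
theorem nonlocal_brezis_lieb
    (d : ℕ) (hd : 1 ≤ d) (lam p : ℝ) (hlam₀ : 0 < lam) (hlam₁ : lam < d)
    (hp₁ : 2 < p)
    (f : ℕ → EuclideanSpace ℝ (Fin d) → ℂ) (f₀ : EuclideanSpace ℝ (Fin d) → ℂ)
    (hmeas : ∀ n, Measurable (f n)) (hmeas₀ : Measurable f₀)
    (hae : ∀ᵐ x : EuclideanSpace ℝ (Fin d), Tendsto (fun n => f n x) atTop (nhds (f₀ x)))
    (hriesz : ∃ M : ℝ≥0∞, M < ⊤ ∧ ∀ n, rieszEnergy d lam (f n) ≤ M)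
    (hLp : ∃ B : ℝ≥0∞, B < ⊤ ∧ ∀ n, eLpNorm (f n) (ENNReal.ofReal p) volume ≤ B) :
    Tendsto (fun n => (rieszEnergy d lam (f n)).toReal
        - (rieszEnergy d lam (fun x => f n x - f₀ x)).toReal
        - (rieszEnergy d lam f₀).toReal) atTop (nhds 0) := by
  obtain ⟨M, hM, hfM⟩ := hriesz
  obtain ⟨B, hB, hfB⟩ := hLp
  have henergy {g : EuclideanSpace ℝ (Fin d) → ℂ} (hg : Measurable g) :=
    rieszEnergy_eq_kernelEnergy d lam hg.aestronglyMeasurable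
  have hdiff (n : ℕ) : Measurable fun x => f n x - f₀ x := (hmeas n).sub hmeas₀
  simp only [henergy, hmeas, hmeas₀, hdiff] at hfM ⊢
  exact nonlocal_brezis_lieb_general hlam₀ (by simpa using hlam₁) (by simpa using hp₁)
    (fun n => (hmeas n).aestronglyMeasurable) hae hM.ne hfM hB.ne hfB
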